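/- arXiv:math/0505153 — 6 statements merged into one kernel-verified Lean document; each statement's English description precedes it below -/
import Mathlib

section
/- Let (X, 𝒳) be a measurable space and g : X → [0, ∞) a measurable function. For a probability measure ρ on X write p(ρ) = ∫_X g dρ, and when 0 < p(ρ) < ∞ let φ(ρ) denote the probability measure with density g / p(ρ) with respect to ρ. Let Θ be a nonempty set, let (ν^i_θ)_{i ∈ ℕ, θ ∈ Θ} be a family of probability measures on X, let T : Θ → Θ be a map and t : ℕ → ℕ a bijection such that for all i ∈ ℕ and θ ∈ Θ one has 0 < p(ν^i_θ) < ∞ and φ(ν^i_θ) = ν^{t(i)}_{T(θ)}. Then for every θ ∈ Θ and every sequence α = (α_i)_{i ∈ ℕ} of nonnegative reals with Σ_i α_i = 1, the mixture ν = Σ_i α_i ν^i_θ satisfies: if p(ν) = Σ_i α_i p(ν^i_θ) < ∞ then φ(ν) = Σ_j a_j ν^j_{T(θ)}, where a_j = α_{t^{-1}(j)} · p(ν^{t^{-1}(j)}_θ) / p(ν); in particular (a_j) is a sequence of nonnegative reals summing to 1. -/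
open MeasureTheory ENNReal

/-- The updating operator of nonlinear filtering maps mixtures to mixtures:
if `φ(ν i θ) = ν (t i) (T θ)` for all `i, θ`, then for a mixture
`ν = ∑ᵢ αᵢ • ν i θ` with `∑ αᵢ = 1` and `∫ g dν < ∞`, one has
`φ(ν) = ∑ⱼ aⱼ • ν j (T θ)` with `aⱼ = α_{t⁻¹ j} · p(ν (t⁻¹ j) θ) / p(ν)`,
and the `aⱼ` sum to `1`. -/
theorem updating_operator_mixture
    {X : Type*} [MeasurableSpace X] (g : X → ℝ≥0∞) (hg : Measurable g)
    {Θ : Type*} [Nonempty Θ] (ν : ℕ → Θ → Measure X)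
    (hνprob : ∀ i θ, IsProbabilityMeasure (ν i θ))
    (T : Θ → Θ) (t : ℕ ≃ ℕ)
    (hppos : ∀ i θ, 0 < ∫⁻ x, g x ∂(ν i θ))
    (hpfin : ∀ i θ, ∫⁻ x, g x ∂(ν i θ) < ∞)
    (hupd : ∀ i θ,
      (ν i θ).withDensity (fun x => g x / ∫⁻ x, g x ∂(ν i θ)) = ν (t i) (T θ))
    (θ : Θ) (α : ℕ → ℝ≥0∞) (hα : ∑' i, α i = 1)
    (hfin : ∫⁻ x, g x ∂(Measure.sum fun i => α i • ν i θ) < ∞) :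
    (∫⁻ x, g x ∂(Measure.sum fun i => α i • ν i θ)
        = ∑' i, α i * ∫⁻ x, g x ∂(ν i θ)) ∧
    (Measure.sum fun i => α i • ν i θ).withDensity
        (fun x => g x / ∫⁻ x, g x ∂(Measure.sum fun i => α i • ν i θ))
      = Measure.sum (fun j =>
          (α (t.symm j) * (∫⁻ x, g x ∂(ν (t.symm j) θ))
            / ∫⁻ x, g x ∂(Measure.sum fun i => α i • ν i θ)) • ν j (T θ)) ∧
    (∑' j, α (t.symm j) * (∫⁻ x, g x ∂(ν (t.symm j) θ))
        / ∫⁻ x, g x ∂(Measure.sum fun i => α i • ν i θ)) = 1 := by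
  have hsum : ∫⁻ x, g x ∂(Measure.sum fun i => α i • ν i θ)
      = ∑' i, α i * ∫⁻ x, g x ∂(ν i θ) := by
    rw [lintegral_sum_measure]
    simp only [lintegral_smul_measure, smul_eq_mul]
  have hp0 : ∫⁻ x, g x ∂(Measure.sum fun i => α i • ν i θ) ≠ 0 := by
    rw [hsum]
    intro h
    rw [ENNReal.tsum_eq_zero] at h
    have h0 : ∀ i, α i = 0 := fun i =>
      (mul_eq_zero.mp (h i)).resolve_right (hppos i θ).ne'
    simp [h0] at hα
  refine ⟨hsum, ?_, ?_⟩
  · generalize hP : ∫⁻ x, g x ∂(Measure.sum fun i => α i • ν i θ) = P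
    ext s hs
    rw [withDensity_apply _ hs, Measure.restrict_sum _ hs, lintegral_sum_measure,
      Measure.sum_apply _ hs]
    refine Eq.trans ?_ (t.tsum_eq _)
    refine tsum_congr fun i => ?_
    have hpi := hppos i θ
    have hpf := hpfin i θ
    simp only [Equiv.symm_apply_apply, Measure.restrict_smul, lintegral_smul_measure,
      Measure.smul_apply, smul_eq_mul]
    rw [← hupd i θ, withDensity_apply _ hs]
    simp only [div_eq_mul_inv]
    rw [lintegral_mul_const _ hg, lintegral_mul_const _ hg]
    generalize ∫⁻ x, g x ∂(ν i θ) = p at hpi hpf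
    generalize ∫⁻ x in s, g x ∂(ν i θ) = q
    calc α i * (q * P⁻¹) = α i * (q * P⁻¹) * (p * p⁻¹) := by
          rw [ENNReal.mul_inv_cancel hpi.ne' hpf.ne, mul_one]
      _ = α i * p * P⁻¹ * (q * p⁻¹) := by ring
  · rw [t.symm.tsum_eq (fun i => α i * (∫⁻ x, g x ∂(ν i θ))
        / ∫⁻ x, g x ∂(Measure.sum fun i => α i • ν i θ))]
    simp only [div_eq_mul_inv]
    rw [ENNReal.tsum_mul_right, ← hsum]
    exact ENNReal.mul_inv_cancel hp0 hfin.ne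
end

section
/- For μ, m ∈ ℝ, σ > 0 and i ∈ ℕ, let ν^i_{(μ,m,σ²)} be the probability measure on ℝ with density x ↦ (x+μ)^{2i}/C_{2i}(m+μ; σ²) with respect to the Gaussian measure N(m, σ²), where C_{2i}(c; σ²) = E((σZ + c)^{2i}) for Z standard Gaussian. Then for every real λ, a random variable X with law ν^i_{(μ,m,σ²)} satisfies E(exp(λX)) = [C_{2i}(m + μ + λσ²; σ²) / C_{2i}(m + μ; σ²)] · exp(λm + λ²σ²/2). -/
open MeasureTheory ProbabilityTheory

/-- `C_{2i}(c; σ²) = E((σZ + c)^{2i})` for `Z` standard Gaussian. -/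
noncomputable def gaussShiftedMoment (i : ℕ) (c σ : ℝ) : ℝ :=
  ∫ z, (σ * z + c) ^ (2 * i) ∂(gaussianReal 0 1)

/-- The probability measure `ν^i_{(μ,m,σ²)}` with density
`x ↦ (x+μ)^{2i}/C_{2i}(m+μ; σ²)` with respect to the Gaussian `N(m, σ²)`. -/
noncomputable def nuKalman (i : ℕ) (μ m σ : ℝ) : Measure ℝ :=
  (gaussianReal m (Real.toNNReal (σ ^ 2))).withDensity
    (fun x => ENNReal.ofReal ((x + μ) ^ (2 * i) / gaussShiftedMoment i (m + μ) σ))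

lemma aux_moment (i : ℕ) (a μ σ : ℝ) :
    gaussShiftedMoment i (a + μ) σ
      = ∫ x, (x + μ) ^ (2 * i) ∂(gaussianReal a (Real.toNNReal (σ ^ 2))) := by
  have h : gaussianReal a (Real.toNNReal (σ ^ 2))
      = (gaussianReal 0 1).map (fun z => σ * z + a) := by
    have h1 : (fun z : ℝ => σ * z + a) = (fun z => z + a) ∘ (fun z => σ * z) := rfl
    rw [h1, ← Measure.map_map (by fun_prop) (by fun_prop), gaussianReal_map_const_mul,
      gaussianReal_map_add_const]
    congr 1
    · simp
    · ext
      simp [sq_nonneg]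
  rw [h, integral_map (by fun_prop) (by fun_prop), gaussShiftedMoment]
  simp only [add_assoc]

lemma aux_pdf (m σ l x : ℝ) (hσ : 0 < σ) :
    gaussianPDFReal m (Real.toNNReal (σ ^ 2)) x * Real.exp (l * x)
      = Real.exp (l * m + l ^ 2 * σ ^ 2 / 2)
        * gaussianPDFReal (m + l * σ ^ 2) (Real.toNNReal (σ ^ 2)) x := by
  simp only [gaussianPDFReal, Real.coe_toNNReal _ (sq_nonneg σ)]
  rw [mul_assoc, ← Real.exp_add, mul_left_comm, ← Real.exp_add]
  congr 2
  field_simp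
  ring

/-- Laplace transform of `ν^i_{(μ,m,σ²)}`: for every real `λ`,
`E(exp(λX)) = [C_{2i}(m+μ+λσ²; σ²)/C_{2i}(m+μ; σ²)] · exp(λm + λ²σ²/2)`. -/
theorem nuKalman_laplace_transform (i : ℕ) (μ m σ : ℝ) (hσ : 0 < σ) (l : ℝ) :
    ∫ x, Real.exp (l * x) ∂(nuKalman i μ m σ)
      = gaussShiftedMoment i (m + μ + l * σ ^ 2) σ / gaussShiftedMoment i (m + μ) σ
          * Real.exp (l * m + l ^ 2 * σ ^ 2 / 2) := by
  have hv : Real.toNNReal (σ ^ 2) ≠ 0 := by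
    simp [Real.toNNReal_eq_zero, hσ.ne']
  have hC : 0 ≤ gaussShiftedMoment i (m + μ) σ :=
    integral_nonneg fun z => (even_two_mul i).pow_nonneg _
  rw [nuKalman, integral_withDensity_eq_integral_toReal_smul (by fun_prop) (by simp)]
  rw [show m + μ + l * σ ^ 2 = (m + l * σ ^ 2) + μ by ring, aux_moment i (m + l * σ ^ 2),
    integral_gaussianReal_eq_integral_smul hv, integral_gaussianReal_eq_integral_smul hv,
    div_mul_eq_mul_div, mul_div_assoc, ← integral_mul_const]
  congr 1
  ext x
  rw [ENNReal.toReal_ofReal (div_nonneg ((even_two_mul i).pow_nonneg _) hC)]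
  simp only [smul_eq_mul]
  have := aux_pdf m σ l x hσ
  linear_combination ((x + μ) ^ (2 * i) / gaussShiftedMoment i (m + μ) σ) * this
end

section
/- For μ, m ∈ ℝ, σ > 0 and i ∈ ℕ, let ν^i_{(μ,m,σ²)} be the probability measure on ℝ with density x ↦ (x+μ)^{2i}/C_{2i}(m+μ; σ²) with respect to the Gaussian measure N(m, σ²), where C_{2i}(c; σ²) = E((σZ + c)^{2i}) for Z standard Gaussian. Then for every fixed i ∈ ℕ and μ, m ∈ ℝ, the measures ν^i_{(μ,m,σ²)} converge weakly to the Dirac measure δ_m as σ → 0⁺. -/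
open MeasureTheory ProbabilityTheory Filter

lemma aux_integrable (n : ℕ) (b : ℝ) :
    Integrable (fun z : ℝ => (|z| + |b|) ^ n) (gaussianReal 0 1) := by
  have h1 : MemLp (fun z : ℝ => |z| + |b|) (n : ENNReal) (gaussianReal 0 1) := by
    have h := (memLp_id_gaussianReal' (μ := 0) (v := 1) (n : ENNReal) (by simp)).norm
    exact h.add (memLp_const |b|)
  have h2 := h1.integrable_norm_pow'
  refine h2.congr (Eventually.of_forall fun z => ?_)
  have : 0 ≤ |z| + |b| := by positivity
  simp [abs_of_nonneg this]

lemma aux_tendsto (n : ℕ) (m b a0 : ℝ) (a : ℝ → ℝ) (ha : Continuous a) (ha0 : a 0 = a0)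
    (hb : ∀ᶠ s in nhdsWithin (0:ℝ) (Set.Ioi 0), |a s| ≤ 1)
    (f : BoundedContinuousFunction ℝ ℝ) :
    Tendsto (fun s => ∫ z, f (s * z + m) * (a s * z + b) ^ n ∂(gaussianReal 0 1))
      (nhdsWithin 0 (Set.Ioi 0)) (nhds (f m * ∫ z, (a0 * z + b) ^ n ∂(gaussianReal 0 1))) := by
  rw [← integral_const_mul]
  refine tendsto_integral_filter_of_dominated_convergence
    (fun z => ‖f‖ * (|z| + |b|) ^ n) ?_ ?_ ((aux_integrable n b).const_mul _) ?_
  · refine Eventually.of_forall fun s => Continuous.aestronglyMeasurable ?_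
    have := f.continuous
    fun_prop
  · filter_upwards [hb] with s hs
    refine Eventually.of_forall fun z => ?_
    rw [norm_mul, norm_pow]
    gcongr
    · exact f.norm_coe_le_norm _
    · rw [Real.norm_eq_abs]
      refine (abs_add_le _ _).trans ?_
      refine add_le_add ?_ le_rfl
      rw [abs_mul]
      exact mul_le_of_le_one_left (abs_nonneg _) hs
  · refine Eventually.of_forall fun z => ?_
    have hc : Continuous fun s => f (s * z + m) * (a s * z + b) ^ n := by
      have := f.continuous
      fun_prop
    have := (hc.tendsto 0).mono_left (nhdsWithin_le_nhds (s := Set.Ioi 0))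
    simpa [ha0] using this

lemma aux_moment_pos (i : ℕ) : 0 < ∫ z, z ^ (2 * i) ∂(gaussianReal 0 1) := by
  have hint : Integrable (fun z : ℝ => z ^ (2 * i)) (gaussianReal 0 1) := by
    refine (aux_integrable (2 * i) 0).congr (Eventually.of_forall fun z => ?_)
    simp [pow_mul]
  rw [integral_pos_iff_support_of_nonneg (fun z => by simp only [pow_mul]; positivity) hint]
  have h0 : NullSingletonClass (gaussianReal 0 1) := nullSingletonClass_gaussianReal one_ne_zero
  have h1 : gaussianReal 0 1 ({0}ᶜ : Set ℝ) = 1 := by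
    rw [prob_compl_eq_one_iff (measurableSet_singleton _)]
    exact measure_singleton _
  refine lt_of_lt_of_le (by rw [h1]; exact one_pos) (measure_mono (μ := gaussianReal 0 1)
    (s := {0}ᶜ) fun z hz => ?_)
  exact pow_ne_zero _ hz

lemma aux_formula (i : ℕ) (μ m σ : ℝ) (f : BoundedContinuousFunction ℝ ℝ) :
    ∫ x, f x ∂(nuKalman i μ m σ) =
      (∫ z, f (σ * z + m) * (σ * z + (m + μ)) ^ (2 * i) ∂(gaussianReal 0 1)) /
        ∫ z, (σ * z + (m + μ)) ^ (2 * i) ∂(gaussianReal 0 1) := by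
  have hC : 0 ≤ gaussShiftedMoment i (m + μ) σ :=
    integral_nonneg fun z => by simp only [pow_mul]; positivity
  have hmap : gaussianReal m (Real.toNNReal (σ ^ 2)) =
      (gaussianReal 0 1).map (fun z => σ * z + m) := by
    have : (fun z : ℝ => σ * z + m) = (· + m) ∘ (σ * ·) := rfl
    rw [this, ← Measure.map_map (by fun_prop) (by fun_prop), gaussianReal_map_const_mul,
      gaussianReal_map_add_const]
    congr 1
    · simp
    · ext; simp [sq_nonneg]
  unfold nuKalman
  rw [integral_withDensity_eq_integral_toReal_smul (by fun_prop)
    (Eventually.of_forall fun _ => ENNReal.ofReal_lt_top), hmap, integral_map (by fun_prop)]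
  · rw [← integral_div]
    congr 1
    ext z
    rw [ENNReal.toReal_ofReal (div_nonneg (by simp only [pow_mul]; positivity) hC), smul_eq_mul]
    unfold gaussShiftedMoment
    ring_nf
  · refine Measurable.aestronglyMeasurable ?_
    have := f.continuous.measurable
    simp only [smul_eq_mul]
    fun_prop

/-- As `σ → 0⁺`, the measures `ν^i_{(μ,m,σ²)}` converge weakly to the Dirac
measure `δ_m`: integrals of every bounded continuous function converge. -/
theorem nuKalman_tendsto_dirac (i : ℕ) (μ m : ℝ) :
    ∀ f : BoundedContinuousFunction ℝ ℝ,
      Tendsto (fun σ => ∫ x, f x ∂(nuKalman i μ m σ))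
        (nhdsWithin 0 (Set.Ioi 0)) (nhds (f m)) := by
  intro f
  simp_rw [aux_formula]
  have key : ∀ (a : ℝ → ℝ) (a0 b : ℝ), Continuous a → a 0 = a0 →
      (∀ᶠ s in nhdsWithin (0:ℝ) (Set.Ioi 0), |a s| ≤ 1) →
      (∫ z, (a0 * z + b) ^ (2 * i) ∂(gaussianReal 0 1)) ≠ 0 →
      Tendsto (fun s => (∫ z, f (s * z + m) * (a s * z + b) ^ (2 * i) ∂(gaussianReal 0 1)) /
        ∫ z, (a s * z + b) ^ (2 * i) ∂(gaussianReal 0 1))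
        (nhdsWithin 0 (Set.Ioi 0)) (nhds (f m)) := by
    intro a a0 b ha ha0 hb hne
    have h1 := aux_tendsto (2 * i) m b a0 a ha ha0 hb f
    have h2 := aux_tendsto (2 * i) m b a0 a ha ha0 hb (BoundedContinuousFunction.const ℝ 1)
    simp only [BoundedContinuousFunction.const_apply, one_mul] at h2
    have h3 := h1.div h2 hne
    rwa [mul_div_cancel_right₀ _ hne] at h3
  by_cases hc : m + μ = 0
  · have h := key (fun _ => 1) 1 0 continuous_const rfl (by simp)
      (by simpa using (aux_moment_pos i).ne')
    refine h.congr' ?_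
    filter_upwards [self_mem_nhdsWithin] with s hs
    have hs0 : s ^ (2 * i) ≠ 0 := pow_ne_zero _ (ne_of_gt hs)
    simp only [hc, add_zero, mul_pow, one_mul, one_pow]
    have e : ∀ z : ℝ, f (s * z + m) * (s ^ (2 * i) * z ^ (2 * i)) =
      s ^ (2 * i) * (f (s * z + m) * z ^ (2 * i)) := fun z => by ring
    simp_rw [e, integral_const_mul]
    rw [mul_div_mul_left _ _ hs0]
  · refine key (fun s => s) 0 (m + μ) continuous_id rfl ?_ ?_
    · have : ∀ᶠ s : ℝ in nhds 0, |s| < 1 :=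
        (continuous_abs.tendsto (0:ℝ)).eventually_lt_const (by simp)
      exact (this.filter_mono nhdsWithin_le_nhds).mono fun s hs => hs.le
    · simp [hc]
end

section
/- Let h ∈ ℝ, γ > 0, μ, m ∈ ℝ, σ > 0, i ∈ ℕ and y ∈ ℝ. Let ν = ν^i_{(μ,m,σ²)} be the probability measure on ℝ with density x ↦ (x+μ)^{2i}/C_{2i}(m+μ; σ²) with respect to N(m, σ²), and let f_x(y) = (2πγ²)^{-1/2} exp(−(y − hx)²/(2γ²)). Set p_ν(y) = ∫_ℝ f_x(y) dν(x). Then 0 < p_ν(y) < ∞ and the probability measure with density x ↦ f_x(y)/p_ν(y) with respect to ν equals ν^i_{(μ, m̂, σ̂²)}, where m̂ = (mγ² + h y σ²)/(γ² + h²σ²) and σ̂² = σ²γ²/(γ² + h²σ²). -/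
open MeasureTheory ProbabilityTheory

lemma gauss_pow_integrable (i : ℕ) (c σ : ℝ) :
    Integrable (fun z : ℝ => (σ * z + c) ^ (2 * i)) (gaussianReal 0 1) := by
  have h1 : MemLp (fun z : ℝ => σ * z + c) ((2 * i : ℕ) : ENNReal) (gaussianReal 0 1) := by
    have h2 : MemLp (id : ℝ → ℝ) ((2 * i : ℕ) : ENNReal) (gaussianReal 0 1) := by
      have := memLp_id_gaussianReal (μ := 0) (v := 1) ((2 * i : ℕ) : NNReal)
      simpa using this
    exact (h2.const_mul σ).add (memLp_const c)
  have := h1.integrable_norm_pow'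
  simpa [pow_mul] using this

lemma gaussShiftedMoment_pos (i : ℕ) (c σ : ℝ) (hσ : 0 < σ) :
    0 < gaussShiftedMoment i c σ := by
  unfold gaussShiftedMoment
  have hn : ∀ z : ℝ, 0 ≤ (σ * z + c) ^ (2 * i) := fun z => by
    rw [pow_mul]; positivity
  refine lt_of_le_of_ne (integral_nonneg hn) (fun h0 => ?_)
  have h1 := (integral_eq_zero_iff_of_nonneg hn (gauss_pow_integrable i c σ)).1 h0.symm
  haveI : NullSingletonClass (gaussianReal 0 1) := nullSingletonClass_gaussianReal one_ne_zero
  have h2 : ∀ᵐ z ∂(gaussianReal 0 1), z ≠ -c / σ := by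
    simp [ae_iff]
  obtain ⟨z, hz, hz'⟩ := (h1.and h2).exists
  have h3 : σ * z + c = 0 := by
    simp only [Pi.zero_apply] at hz
    exact by_contra fun hne => pow_ne_zero _ hne hz
  apply hz'
  field_simp
  linarith

lemma gaussian_eq_map (m σ : ℝ) :
    gaussianReal m (Real.toNNReal (σ ^ 2))
      = (gaussianReal 0 1).map (fun z => σ * z + m) := by
  have h1 : (fun z : ℝ => σ * z + m) = (fun z => z + m) ∘ (fun z => σ * z) := rfl
  rw [h1, ← Measure.map_map (by fun_prop) (by fun_prop), gaussianReal_map_const_mul,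
    gaussianReal_map_add_const]
  congr 1
  · simp
  · ext; simp [sq_nonneg]

lemma nuKalman_univ (i : ℕ) (μ m σ : ℝ) (hσ : 0 < σ) :
    nuKalman i μ m σ Set.univ = 1 := by
  have hC := gaussShiftedMoment_pos i (m + μ) σ hσ
  unfold nuKalman
  rw [withDensity_apply _ MeasurableSet.univ, Measure.restrict_univ, gaussian_eq_map,
    lintegral_map (by fun_prop) (by fun_prop)]
  have hI := (gauss_pow_integrable i (m + μ) σ).div_const (gaussShiftedMoment i (m + μ) σ)
  simp only [add_assoc]
  rw [← ofReal_integral_eq_lintegral_ofReal hI, integral_div]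
  · change ENNReal.ofReal (gaussShiftedMoment i (m + μ) σ / _) = 1
    rw [div_self hC.ne', ENNReal.ofReal_one]
  · refine Filter.Eventually.of_forall (fun z => ?_)
    have : 0 ≤ (σ * z + (m + μ)) ^ (2 * i) := by rw [pow_mul]; positivity
    exact div_nonneg this hC.le

lemma nuKalman_eq (i : ℕ) (μ m σ : ℝ) (hσ : 0 < σ) :
    nuKalman i μ m σ = volume.withDensity (fun x =>
      ENNReal.ofReal (gaussianPDFReal m (Real.toNNReal (σ ^ 2)) x
        * ((x + μ) ^ (2 * i) / gaussShiftedMoment i (m + μ) σ))) := by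
  have hv : Real.toNNReal (σ ^ 2) ≠ 0 := by
    simp only [ne_eq, Real.toNNReal_eq_zero, not_le]; positivity
  unfold nuKalman
  rw [gaussianReal_of_var_ne_zero _ hv, ← withDensity_mul _ (by fun_prop) (by fun_prop)]
  congr 1
  ext x
  simp only [Pi.mul_apply, gaussianPDF]
  rw [ENNReal.ofReal_mul (gaussianPDFReal_nonneg _ _ _)]

lemma gauss_update (h γ m σ y : ℝ) (hγ : 0 < γ) (hσ : 0 < σ) :
    ∃ K : ℝ, 0 < K ∧ ∀ x : ℝ,
      gaussianPDFReal m (Real.toNNReal (σ ^ 2)) x * ((Real.sqrt (2 * Real.pi * γ ^ 2))⁻¹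
            * Real.exp (-(y - h * x) ^ 2 / (2 * γ ^ 2)))
      = K * gaussianPDFReal ((m * γ ^ 2 + h * y * σ ^ 2) / (γ ^ 2 + h ^ 2 * σ ^ 2))
          (Real.toNNReal ((σ * γ / Real.sqrt (γ ^ 2 + h ^ 2 * σ ^ 2)) ^ 2)) x := by
  have hD : 0 < γ ^ 2 + h ^ 2 * σ ^ 2 := by positivity
  have hs : (σ * γ / Real.sqrt (γ ^ 2 + h ^ 2 * σ ^ 2)) ^ 2
      = σ ^ 2 * γ ^ 2 / (γ ^ 2 + h ^ 2 * σ ^ 2) := by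
    rw [div_pow, Real.sq_sqrt hD.le, mul_pow]
  rw [hs]
  have hv : 0 < σ ^ 2 * γ ^ 2 / (γ ^ 2 + h ^ 2 * σ ^ 2) := by positivity
  have hpi := Real.pi_pos
  have hS : 0 < Real.sqrt (2 * Real.pi * (σ ^ 2 * γ ^ 2 / (γ ^ 2 + h ^ 2 * σ ^ 2))) := by
    positivity
  refine ⟨(Real.sqrt (2 * Real.pi * γ ^ 2))⁻¹ * (Real.sqrt (2 * Real.pi * σ ^ 2))⁻¹
    * Real.sqrt (2 * Real.pi * (σ ^ 2 * γ ^ 2 / (γ ^ 2 + h ^ 2 * σ ^ 2)))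
    * Real.exp (-(y - h * m) ^ 2 / (2 * (γ ^ 2 + h ^ 2 * σ ^ 2))), by positivity, fun x => ?_⟩
  simp only [gaussianPDFReal, Real.coe_toNNReal _ hv.le, Real.coe_toNNReal _ (sq_nonneg σ)]
  have key : Real.exp (-(x - m) ^ 2 / (2 * σ ^ 2)) * Real.exp (-(y - h * x) ^ 2 / (2 * γ ^ 2))
      = Real.exp (-(y - h * m) ^ 2 / (2 * (γ ^ 2 + h ^ 2 * σ ^ 2)))
        * Real.exp (-(x - (m * γ ^ 2 + h * y * σ ^ 2) / (γ ^ 2 + h ^ 2 * σ ^ 2)) ^ 2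
          / (2 * (σ ^ 2 * γ ^ 2 / (γ ^ 2 + h ^ 2 * σ ^ 2)))) := by
    rw [← Real.exp_add, ← Real.exp_add]
    congr 1
    field_simp
    ring
  generalize Real.sqrt (2 * Real.pi * (σ ^ 2 * γ ^ 2 / (γ ^ 2 + h ^ 2 * σ ^ 2))) = S at hS ⊢
  calc _ = (Real.sqrt (2 * Real.pi * γ ^ 2))⁻¹ * (Real.sqrt (2 * Real.pi * σ ^ 2))⁻¹
        * (Real.exp (-(x - m) ^ 2 / (2 * σ ^ 2))
          * Real.exp (-(y - h * x) ^ 2 / (2 * γ ^ 2))) := by ring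
    _ = (Real.sqrt (2 * Real.pi * γ ^ 2))⁻¹ * (Real.sqrt (2 * Real.pi * σ ^ 2))⁻¹ * (S * S⁻¹)
        * (Real.exp (-(x - m) ^ 2 / (2 * σ ^ 2))
          * Real.exp (-(y - h * x) ^ 2 / (2 * γ ^ 2))) := by
        rw [mul_inv_cancel₀ hS.ne', mul_one]
    _ = _ := by rw [key]; ring

/-- Updating step of the Kalman filter `y = hx + γw`: conditioning
`ν^i_{(μ,m,σ²)}` on the observation `y` (via the Gaussian likelihood
`f_x(y) = (2πγ²)^{-1/2} exp(−(y−hx)²/(2γ²))`) yields `ν^i_{(μ,m̂,σ̂²)}` with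
`m̂ = (mγ² + hyσ²)/(γ² + h²σ²)` and `σ̂² = σ²γ²/(γ² + h²σ²)`. -/
theorem nuKalman_updating (h γ μ m σ : ℝ) (hγ : 0 < γ) (hσ : 0 < σ) (i : ℕ) (y : ℝ) :
    0 < ∫⁻ x, ENNReal.ofReal
          ((Real.sqrt (2 * Real.pi * γ ^ 2))⁻¹
            * Real.exp (-(y - h * x) ^ 2 / (2 * γ ^ 2))) ∂(nuKalman i μ m σ) ∧
    (∫⁻ x, ENNReal.ofReal
          ((Real.sqrt (2 * Real.pi * γ ^ 2))⁻¹
            * Real.exp (-(y - h * x) ^ 2 / (2 * γ ^ 2))) ∂(nuKalman i μ m σ)) < ⊤ ∧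
    (nuKalman i μ m σ).withDensity
        (fun x => ENNReal.ofReal
            ((Real.sqrt (2 * Real.pi * γ ^ 2))⁻¹
              * Real.exp (-(y - h * x) ^ 2 / (2 * γ ^ 2)))
          / ∫⁻ x, ENNReal.ofReal
              ((Real.sqrt (2 * Real.pi * γ ^ 2))⁻¹
                * Real.exp (-(y - h * x) ^ 2 / (2 * γ ^ 2))) ∂(nuKalman i μ m σ))
      = nuKalman i μ ((m * γ ^ 2 + h * y * σ ^ 2) / (γ ^ 2 + h ^ 2 * σ ^ 2))
          (σ * γ / Real.sqrt (γ ^ 2 + h ^ 2 * σ ^ 2)) := by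
  obtain ⟨K, hK, hKx⟩ := gauss_update h γ m σ y hγ hσ
  have hD : 0 < γ ^ 2 + h ^ 2 * σ ^ 2 := by positivity
  have hσ' : 0 < σ * γ / Real.sqrt (γ ^ 2 + h ^ 2 * σ ^ 2) := by positivity
  set m' := (m * γ ^ 2 + h * y * σ ^ 2) / (γ ^ 2 + h ^ 2 * σ ^ 2)
  set σ' := σ * γ / Real.sqrt (γ ^ 2 + h ^ 2 * σ ^ 2)
  set f : ℝ → ENNReal := fun x => ENNReal.ofReal
          ((Real.sqrt (2 * Real.pi * γ ^ 2))⁻¹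
            * Real.exp (-(y - h * x) ^ 2 / (2 * γ ^ 2))) with hf
  have hfm : Measurable f := by fun_prop
  have hC := gaussShiftedMoment_pos i (m + μ) σ hσ
  have hC' := gaussShiftedMoment_pos i (m' + μ) σ' hσ'
  obtain ⟨R, hR, hRdef⟩ : ∃ R : ℝ, 0 < R ∧
      R = K * gaussShiftedMoment i (m' + μ) σ' / gaussShiftedMoment i (m + μ) σ :=
    ⟨_, by positivity, rfl⟩
  have main : (nuKalman i μ m σ).withDensity f = ENNReal.ofReal R • nuKalman i μ m' σ' := by
    rw [nuKalman_eq i μ m σ hσ, nuKalman_eq i μ m' σ' hσ',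
      ← withDensity_mul _ (by fun_prop) hfm, ← withDensity_smul _ (by fun_prop)]
    congr 1
    ext x
    have hp : 0 ≤ (x + μ) ^ (2 * i) := by rw [pow_mul]; positivity
    simp only [Pi.mul_apply, Pi.smul_apply, smul_eq_mul, hf]
    rw [← ENNReal.ofReal_mul (mul_nonneg (gaussianPDFReal_nonneg _ _ _) (div_nonneg hp hC.le)),
      ← ENNReal.ofReal_mul hR.le, mul_right_comm, hKx x, hRdef]
    congr 1
    field_simp
  have hp : ∫⁻ x, f x ∂(nuKalman i μ m σ) = ENNReal.ofReal R := by
    have := congrArg (fun ν : Measure ℝ => ν Set.univ) main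
    simpa [withDensity_apply, nuKalman_univ i μ m' σ' hσ'] using this
  change 0 < ∫⁻ x, f x ∂(nuKalman i μ m σ) ∧ ∫⁻ x, f x ∂(nuKalman i μ m σ) < ⊤ ∧
    (nuKalman i μ m σ).withDensity (fun x => f x / ∫⁻ x, f x ∂(nuKalman i μ m σ)) = _
  rw [hp]
  have hR0 : ENNReal.ofReal R ≠ 0 := by simpa using hR
  refine ⟨pos_iff_ne_zero.2 hR0, ENNReal.ofReal_lt_top, ?_⟩
  have h1 : (fun x => f x / ENNReal.ofReal R) = (ENNReal.ofReal R)⁻¹ • f := by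
    ext x
    simp [div_eq_mul_inv, mul_comm]
  rw [h1, withDensity_smul _ hfm, main, smul_smul,
    ENNReal.inv_mul_cancel hR0 ENNReal.ofReal_ne_top, one_smul]
end

section
/- Let δ ≥ 1 be real, λ > 0, σ > 0, i ∈ ℕ and y > 0. Let ν^{i,(δ)}_σ be the probability measure on (0, ∞) with Lebesgue density x ↦ 1_{(x>0)} (2/(σ√(2π))) · x^{δ−1+2i}/(C_{δ−1+2i} σ^{δ−1+2i}) · exp(−x²/(2σ²)), where C_α = ∫_ℝ |u|^α (2π)^{−1/2} e^{−u²/2} du, and let f_x(y) = 2λx²/y³ · exp(−λx²/y²) for x, y > 0. Set p(y) = ∫_0^∞ f_x(y) dν^{i,(δ)}_σ(x). Then 0 < p(y) < ∞ and the probability measure with density x ↦ f_x(y)/p(y) with respect to ν^{i,(δ)}_σ equals ν^{i+1,(δ)}_{T_y(σ)}, where T_y(σ) = σ y / (y² + 2λσ²)^{1/2}. -/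
open MeasureTheory

/-- `C_α = ∫ |u|^α (2π)^{−1/2} e^{−u²/2} du`, the `α`-th absolute moment of a
standard Gaussian. -/
noncomputable def gaussAbsMoment (α : ℝ) : ℝ :=
  ∫ u : ℝ, |u| ^ α * (Real.sqrt (2 * Real.pi))⁻¹ * Real.exp (-u ^ 2 / 2)

/-- The probability measure `ν^{i,(δ)}_σ` on `(0,∞)` with Lebesgue density
`x ↦ 1_{(x>0)} (2/(σ√(2π))) x^{δ−1+2i}/(C_{δ−1+2i} σ^{δ−1+2i}) exp(−x²/(2σ²))`. -/
noncomputable def nuRadial (δ : ℝ) (i : ℕ) (σ : ℝ) : Measure ℝ :=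
  volume.withDensity (fun x => ENNReal.ofReal
    (if 0 < x then
      2 / (σ * Real.sqrt (2 * Real.pi))
        * x ^ (δ - 1 + 2 * (i : ℝ))
        / (gaussAbsMoment (δ - 1 + 2 * (i : ℝ)) * σ ^ (δ - 1 + 2 * (i : ℝ)))
        * Real.exp (-x ^ 2 / (2 * σ ^ 2))
    else 0))

noncomputable def radConst (α σ : ℝ) : ℝ :=
  2 / (σ * Real.sqrt (2 * Real.pi)) / (gaussAbsMoment α * σ ^ α)

noncomputable def radDens (α σ x : ℝ) : ℝ :=
  if 0 < x then
      2 / (σ * Real.sqrt (2 * Real.pi))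
        * x ^ α
        / (gaussAbsMoment α * σ ^ α)
        * Real.exp (-x ^ 2 / (2 * σ ^ 2))
    else 0

lemma radDens_eq (α σ x : ℝ) : radDens α σ x =
    (Set.Ioi (0:ℝ)).indicator
      (fun x => radConst α σ * (x ^ α * Real.exp (-(1 / (2 * σ ^ 2)) * x ^ 2))) x := by
  unfold radDens radConst
  by_cases hx : 0 < x
  · rw [if_pos hx, Set.indicator_of_mem (Set.mem_Ioi.2 hx)]
    have : -x ^ 2 / (2 * σ ^ 2) = -(1 / (2 * σ ^ 2)) * x ^ 2 := by ring
    rw [this]; ring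
  · rw [if_neg hx, Set.indicator_of_notMem (by simpa using hx)]

lemma radInt_eq (α b : ℝ) (hα : 0 ≤ α) (hb : 0 < b) :
    ∫ x in Set.Ioi (0:ℝ), x ^ α * Real.exp (-b * x ^ 2)
      = b ^ (-(α + 1) / 2) * (1 / 2) * Real.Gamma ((α + 1) / 2) := by
  have := integral_rpow_mul_exp_neg_mul_rpow (p := 2) (q := α) two_pos (by linarith) hb
  simpa only [Real.rpow_two] using this

lemma gaussAbsMoment_eq (α : ℝ) : gaussAbsMoment α =
    2 * (Real.sqrt (2 * Real.pi))⁻¹ *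
      ∫ x in Set.Ioi (0:ℝ), x ^ α * Real.exp (-(1 / 2) * x ^ 2) := by
  unfold gaussAbsMoment
  have h := integral_comp_abs
    (f := fun u : ℝ => u ^ α * (Real.sqrt (2 * Real.pi))⁻¹ * Real.exp (-u ^ 2 / 2))
  simp only [sq_abs] at h
  rw [h, mul_assoc]
  congr 1
  rw [← integral_const_mul]
  refine integral_congr_ae (Filter.Eventually.of_forall fun x => ?_)
  dsimp only
  have : -x ^ 2 / 2 = -(1 / 2) * x ^ 2 := by ring
  rw [this]; ring

lemma gaussAbsMoment_pos (α : ℝ) (hα : 0 ≤ α) : 0 < gaussAbsMoment α := by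
  rw [gaussAbsMoment_eq, radInt_eq α _ hα (by norm_num)]
  have := Real.Gamma_pos_of_pos (s := (α + 1) / 2) (by linarith)
  positivity

lemma radConst_pos (α σ : ℝ) (hα : 0 ≤ α) (hσ : 0 < σ) : 0 < radConst α σ := by
  unfold radConst
  have := gaussAbsMoment_pos α hα
  positivity

lemma radInt_scale (α σ : ℝ) (hα : 0 ≤ α) (hσ : 0 < σ) :
    radConst α σ * ∫ x in Set.Ioi (0:ℝ), x ^ α * Real.exp (-(1 / (2 * σ ^ 2)) * x ^ 2) = 1 := by
  have hC := gaussAbsMoment_pos α hα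
  have h1 := gaussAbsMoment_eq α
  rw [radInt_eq α _ hα (by norm_num)] at h1
  rw [radInt_eq α _ hα (by positivity)]
  have h2 : (1 / (2 * σ ^ 2)) ^ (-(α + 1) / 2) = (1 / 2 : ℝ) ^ (-(α + 1) / 2) * (σ * σ ^ α) := by
    have : 1 / (2 * σ ^ 2) = (1 / 2) * σ ^ (-2 : ℝ) := by
      rw [Real.rpow_neg hσ.le, Real.rpow_two]; field_simp
    rw [this, Real.mul_rpow (by norm_num) (by positivity), ← Real.rpow_mul hσ.le,
      show (-2 : ℝ) * (-(α + 1) / 2) = 1 + α by ring, Real.rpow_add hσ, Real.rpow_one]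
  have hs : 0 < Real.sqrt (2 * Real.pi) := by positivity
  have hσα : 0 < σ ^ α := by positivity
  have h3 : (1 / 2 : ℝ) ^ (-(α + 1) / 2) * (1 / 2) * Real.Gamma ((α + 1) / 2)
      = gaussAbsMoment α * Real.sqrt (2 * Real.pi) / 2 := by
    rw [h1]; field_simp
  have h4 : (1 / (2 * σ ^ 2)) ^ (-(α + 1) / 2) * (1 / 2) * Real.Gamma ((α + 1) / 2)
      = σ * σ ^ α * (gaussAbsMoment α * Real.sqrt (2 * Real.pi) / 2) := by
    rw [h2, ← h3]; ring
  rw [h4]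
  unfold radConst
  field_simp

lemma measurable_radDens (α σ : ℝ) : Measurable (radDens α σ) := by
  unfold radDens
  exact Measurable.ite measurableSet_Ioi (by fun_prop) (by fun_prop)

lemma radDens_nonneg (α σ x : ℝ) (hα : 0 ≤ α) (hσ : 0 < σ) : 0 ≤ radDens α σ x := by
  rw [radDens_eq]
  refine Set.indicator_nonneg (fun x hx => ?_) x
  have := radConst_pos α σ hα hσ
  have hx : 0 < x := hx
  positivity

lemma lintegral_radDens (α σ : ℝ) (hα : 0 ≤ α) (hσ : 0 < σ) :
    ∫⁻ x, ENNReal.ofReal (radDens α σ x) = 1 := by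
  rw [← ofReal_integral_eq_lintegral_ofReal]
  · simp_rw [radDens_eq]
    rw [integral_indicator measurableSet_Ioi, integral_const_mul, radInt_scale α σ hα hσ,
      ENNReal.ofReal_one]
  · have : radDens α σ = _ := funext (radDens_eq α σ)
    rw [this]
    exact IntegrableOn.integrable_indicator
      ((integrableOn_rpow_mul_exp_neg_mul_sq (by positivity) (by linarith)).const_mul _)
      measurableSet_Ioi
  · exact Filter.Eventually.of_forall fun x => radDens_nonneg α σ x hα hσ

lemma radDens_mul (α lam σ y : ℝ) (hα : 0 ≤ α) (hlam : 0 < lam) (hσ : 0 < σ) (hy : 0 < y) :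
    ∃ K : ℝ, 0 < K ∧ ∀ x, radDens α σ x *
        (2 * lam * x ^ 2 / y ^ 3 * Real.exp (-lam * x ^ 2 / y ^ 2))
      = K * radDens (α + 2) (σ * y / Real.sqrt (y ^ 2 + 2 * lam * σ ^ 2)) x := by
  set T := σ * y / Real.sqrt (y ^ 2 + 2 * lam * σ ^ 2) with hT
  have hTpos : 0 < T := by positivity
  have hT2 : T ^ 2 = σ ^ 2 * y ^ 2 / (y ^ 2 + 2 * lam * σ ^ 2) := by
    rw [hT, div_pow, mul_pow, Real.sq_sqrt (by positivity)]
  have h1 := radConst_pos α σ hα hσ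
  have h2 := radConst_pos (α + 2) T (by linarith) hTpos
  refine ⟨2 * lam / y ^ 3 * radConst α σ / radConst (α + 2) T, by positivity, fun x => ?_⟩
  rw [radDens_eq, radDens_eq]
  by_cases hx : 0 < x
  · rw [Set.indicator_of_mem (Set.mem_Ioi.2 hx), Set.indicator_of_mem (Set.mem_Ioi.2 hx)]
    have he : Real.exp (-(1 / (2 * T ^ 2)) * x ^ 2)
        = Real.exp (-(1 / (2 * σ ^ 2)) * x ^ 2) * Real.exp (-lam * x ^ 2 / y ^ 2) := by
      rw [← Real.exp_add, hT2]
      congr 1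
      field_simp
      ring
    rw [he, Real.rpow_add hx, Real.rpow_two]
    field_simp
  · rw [Set.indicator_of_notMem (by simpa using hx), Set.indicator_of_notMem (by simpa using hx)]
    simp

/-- Updating operator for the observation model `y = x·w`, `w ∼ Γ^{−1/2}` with
`Γ` exponential of parameter `λ`: conditioning `ν^{i,(δ)}_σ` on `y` via the
likelihood `f_x(y) = 2λx²y^{−3} exp(−λx²/y²)` yields `ν^{i+1,(δ)}_{T_y(σ)}`
with `T_y(σ) = σy/(y² + 2λσ²)^{1/2}`. -/
theorem nuRadial_updating (δ lam σ : ℝ) (hδ : 1 ≤ δ) (hlam : 0 < lam) (hσ : 0 < σ)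
    (i : ℕ) (y : ℝ) (hy : 0 < y) :
    0 < ∫⁻ x, ENNReal.ofReal (2 * lam * x ^ 2 / y ^ 3 * Real.exp (-lam * x ^ 2 / y ^ 2))
          ∂(nuRadial δ i σ) ∧
    (∫⁻ x, ENNReal.ofReal (2 * lam * x ^ 2 / y ^ 3 * Real.exp (-lam * x ^ 2 / y ^ 2))
          ∂(nuRadial δ i σ)) < ⊤ ∧
    (nuRadial δ i σ).withDensity
        (fun x => ENNReal.ofReal
            (2 * lam * x ^ 2 / y ^ 3 * Real.exp (-lam * x ^ 2 / y ^ 2))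
          / ∫⁻ x, ENNReal.ofReal
              (2 * lam * x ^ 2 / y ^ 3 * Real.exp (-lam * x ^ 2 / y ^ 2))
              ∂(nuRadial δ i σ))
      = nuRadial δ (i + 1) (σ * y / Real.sqrt (y ^ 2 + 2 * lam * σ ^ 2)) := by
  have hα : 0 ≤ δ - 1 + 2 * (i : ℝ) := by
    have : (0:ℝ) ≤ i := Nat.cast_nonneg i
    linarith
  set α := δ - 1 + 2 * (i : ℝ) with hαdef
  obtain ⟨K, hK, hKx⟩ := radDens_mul α lam σ y hα hlam hσ hy
  set T := σ * y / Real.sqrt (y ^ 2 + 2 * lam * σ ^ 2) with hT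
  have hTpos : 0 < T := by positivity
  have hnu : nuRadial δ i σ = volume.withDensity (fun x => ENNReal.ofReal (radDens α σ x)) := rfl
  have hnu' : nuRadial δ (i + 1) T =
      volume.withDensity (fun x => ENNReal.ofReal (radDens (α + 2) T x)) := by
    have : α + 2 = δ - 1 + 2 * ((i + 1 : ℕ) : ℝ) := by rw [hαdef]; push_cast; ring
    rw [this]; rfl
  have hm : Measurable (fun x => ENNReal.ofReal (radDens α σ x)) :=
    (measurable_radDens α σ).ennreal_ofReal
  have hm' : Measurable (fun x => ENNReal.ofReal (radDens (α + 2) T x)) :=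
    (measurable_radDens (α + 2) T).ennreal_ofReal
  have hf : Measurable (fun x : ℝ => ENNReal.ofReal
      (2 * lam * x ^ 2 / y ^ 3 * Real.exp (-lam * x ^ 2 / y ^ 2))) := by fun_prop
  have hmul : ∀ x : ℝ, ENNReal.ofReal (radDens α σ x) * ENNReal.ofReal
      (2 * lam * x ^ 2 / y ^ 3 * Real.exp (-lam * x ^ 2 / y ^ 2))
      = ENNReal.ofReal K * ENNReal.ofReal (radDens (α + 2) T x) := fun x => by
    rw [← ENNReal.ofReal_mul (radDens_nonneg α σ x hα hσ), hKx, ENNReal.ofReal_mul hK.le]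
  have hp : ∫⁻ x, ENNReal.ofReal (2 * lam * x ^ 2 / y ^ 3 * Real.exp (-lam * x ^ 2 / y ^ 2))
      ∂(nuRadial δ i σ) = ENNReal.ofReal K := by
    rw [hnu, lintegral_withDensity_eq_lintegral_mul _ hm hf]
    simp only [Pi.mul_apply, hmul]
    rw [lintegral_const_mul _ hm', lintegral_radDens _ _ (by linarith) hTpos, mul_one]
  rw [hp]
  have hK0 : ENNReal.ofReal K ≠ 0 := by simpa using hK
  refine ⟨by simpa using hK, ENNReal.ofReal_lt_top, ?_⟩
  rw [hnu, hnu', ← withDensity_mul _ hm (hf.div_const _)]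
  congr 1
  ext x
  simp only [Pi.mul_apply]
  rw [← mul_div_assoc, hmul, mul_comm, mul_div_assoc,
    ENNReal.div_self hK0 ENNReal.ofReal_ne_top, mul_one]
end

section
/- Let δ ≥ 1 be real, σ > 0, λ > 0, i ∈ ℕ and y ∈ ℕ. Let ρ be the Gamma distribution on (0, ∞) with shape i + δ/2 and rate 1/(2σ²) (density r ↦ (1/(2σ²))^{i+δ/2} r^{i+δ/2−1} e^{−r/(2σ²)}/Γ(i+δ/2)), and let f_r(y) = e^{−λr}(λr)^y/y! be the Poisson(λr) probability of the value y. Set p(y) = ∫_0^∞ f_r(y) dρ(r). Then 0 < p(y) < ∞ and the probability measure with density r ↦ f_r(y)/p(y) with respect to ρ is the Gamma distribution with shape y + i + δ/2 and rate λ + 1/(2σ²); equivalently, in the notation of the filtering algorithm, t_y(i) = y + i and T_y(σ) = (2λ + 1/σ²)^{−1/2}. -/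
open MeasureTheory ProbabilityTheory

lemma gp_key (a c lam : ℝ) (ha : 0 < a) (hc : 0 < c) (hlam : 0 < lam) (y : ℕ) :
    ∃ K : ℝ, 0 < K ∧ ∀ᵐ r : ℝ, gammaPDF a c r * ENNReal.ofReal
          (Real.exp (-lam * r) * (lam * r) ^ y / Nat.factorial y)
        = ENNReal.ofReal K * gammaPDF ((y : ℝ) + a) (lam + c) r := by
  have hya : 0 < (y : ℝ) + a := by positivity
  have hlc : 0 < lam + c := by positivity
  have hG : 0 < Real.Gamma a := Real.Gamma_pos_of_pos ha
  have hG' : 0 < Real.Gamma ((y : ℝ) + a) := Real.Gamma_pos_of_pos hya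
  have hK : 0 < lam ^ y / (Nat.factorial y : ℝ) * (c ^ a / Real.Gamma a) *
      (Real.Gamma ((y : ℝ) + a) / (lam + c) ^ ((y : ℝ) + a)) := by positivity
  refine ⟨_, hK, ?_⟩
  filter_upwards [Measure.ae_ne volume (0 : ℝ)] with r hr
  rcases lt_or_gt_of_ne hr with h | h
  · simp [gammaPDF_of_neg h]
  · rw [gammaPDF_of_nonneg h.le, gammaPDF_of_nonneg h.le,
      ← ENNReal.ofReal_mul (by positivity), ← ENNReal.ofReal_mul hK.le]
    congr 1
    have e1 : r ^ ((y : ℝ) + a - 1) = r ^ y * r ^ (a - 1) := by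
      rw [add_sub_assoc, Real.rpow_add h, Real.rpow_natCast]
    have e2 : Real.exp (-((lam + c) * r)) = Real.exp (-lam * r) * Real.exp (-(c * r)) := by
      rw [← Real.exp_add]; congr 1; ring
    have hP : (lam + c) ^ ((y : ℝ) + a) ≠ 0 := (Real.rpow_pos_of_pos hlc _).ne'
    rw [e1, e2, mul_pow]
    generalize (lam + c) ^ ((y : ℝ) + a) = P at *
    generalize Real.Gamma ((y : ℝ) + a) = G at *
    generalize Real.exp (-lam * r) = E1
    generalize Real.exp (-(c * r)) = E2
    generalize r ^ (a - 1) = R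
    have := hG'.ne'
    field_simp

lemma gp_lintegral (a c lam K : ℝ) (ha : 0 < a) (hc : 0 < c) (hlam : 0 < lam) (y : ℕ)
    (hK : ∀ᵐ r : ℝ, gammaPDF a c r * ENNReal.ofReal
          (Real.exp (-lam * r) * (lam * r) ^ y / Nat.factorial y)
        = ENNReal.ofReal K * gammaPDF ((y : ℝ) + a) (lam + c) r) :
    ∫⁻ r, ENNReal.ofReal
          (Real.exp (-lam * r) * (lam * r) ^ y / Nat.factorial y) ∂(gammaMeasure a c)
      = ENNReal.ofReal K := by
  have hm (a c : ℝ) : Measurable (gammaPDF a c) := (measurable_gammaPDFReal a c).ennreal_ofReal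
  rw [gammaMeasure, lintegral_withDensity_eq_lintegral_mul _ (hm a c) (by fun_prop)]
  simp only [Pi.mul_apply]
  rw [lintegral_congr_ae hK, lintegral_const_mul _ (hm _ _),
    lintegral_gammaPDF_eq_one (by positivity) (by positivity), mul_one]

lemma gp_withDensity (a c lam K : ℝ) (hK0 : 0 < K) (y : ℕ)
    (hK : ∀ᵐ r : ℝ, gammaPDF a c r * ENNReal.ofReal
          (Real.exp (-lam * r) * (lam * r) ^ y / Nat.factorial y)
        = ENNReal.ofReal K * gammaPDF ((y : ℝ) + a) (lam + c) r) :
    (gammaMeasure a c).withDensity (fun r => ENNReal.ofReal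
          (Real.exp (-lam * r) * (lam * r) ^ y / Nat.factorial y) / ENNReal.ofReal K)
      = gammaMeasure ((y : ℝ) + a) (lam + c) := by
  have hm (a c : ℝ) : Measurable (gammaPDF a c) := (measurable_gammaPDFReal a c).ennreal_ofReal
  rw [gammaMeasure, gammaMeasure, ← withDensity_mul _ (hm a c) (by fun_prop)]
  refine withDensity_congr_ae ?_
  filter_upwards [hK] with r hr
  rw [Pi.mul_apply, ← mul_div_assoc, hr, mul_comm,
    ENNReal.mul_div_cancel_right (by simpa using hK0) ENNReal.ofReal_ne_top]

/-- Updating step for conditionally Poisson observations of a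
Cox–Ingersoll–Ross signal: if the prior on the signal is the Gamma
distribution with shape `i + δ/2` and rate `1/(2σ²)` and the observation `y`
is Poisson with parameter `λr` given the signal value `r`, then the posterior
is the Gamma distribution with shape `y + i + δ/2` and rate `λ + 1/(2σ²)`;
equivalently `t_y(i) = y + i` and `T_y(σ) = (2λ + 1/σ²)^{−1/2}`. -/
theorem gamma_poisson_updating (δ σ lam : ℝ) (hδ : 1 ≤ δ) (hσ : 0 < σ)
    (hlam : 0 < lam) (i : ℕ) (y : ℕ) :
    0 < ∫⁻ r, ENNReal.ofReal
          (Real.exp (-lam * r) * (lam * r) ^ y / Nat.factorial y)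
          ∂(gammaMeasure ((i : ℝ) + δ / 2) (1 / (2 * σ ^ 2))) ∧
    (∫⁻ r, ENNReal.ofReal
          (Real.exp (-lam * r) * (lam * r) ^ y / Nat.factorial y)
          ∂(gammaMeasure ((i : ℝ) + δ / 2) (1 / (2 * σ ^ 2)))) < ⊤ ∧
    (gammaMeasure ((i : ℝ) + δ / 2) (1 / (2 * σ ^ 2))).withDensity
        (fun r => ENNReal.ofReal
            (Real.exp (-lam * r) * (lam * r) ^ y / Nat.factorial y)
          / ∫⁻ r, ENNReal.ofReal
              (Real.exp (-lam * r) * (lam * r) ^ y / Nat.factorial y)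
              ∂(gammaMeasure ((i : ℝ) + δ / 2) (1 / (2 * σ ^ 2))))
      = gammaMeasure ((y : ℝ) + i + δ / 2) (lam + 1 / (2 * σ ^ 2)) ∧
    lam + 1 / (2 * σ ^ 2)
      = 1 / (2 * ((2 * lam + 1 / σ ^ 2) ^ (-(1 : ℝ) / 2)) ^ 2) := by
  have ha : 0 < (i : ℝ) + δ / 2 := by positivity
  have hc : 0 < 1 / (2 * σ ^ 2) := by positivity
  obtain ⟨K, hK0, hK⟩ := gp_key _ _ lam ha hc hlam y
  rw [gp_lintegral _ _ lam K ha hc hlam y hK]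
  refine ⟨by simpa using hK0, ENNReal.ofReal_lt_top, ?_, ?_⟩
  · rw [gp_withDensity _ _ lam K hK0 y hK, add_assoc]
  · have hp : 0 < 2 * lam + 1 / σ ^ 2 := by positivity
    have e : ((2 * lam + 1 / σ ^ 2) ^ (-(1 : ℝ) / 2)) ^ 2 = (2 * lam + 1 / σ ^ 2)⁻¹ := by
      rw [← Real.rpow_natCast ((2 * lam + 1 / σ ^ 2) ^ (-(1 : ℝ) / 2)) 2,
        ← Real.rpow_mul hp.le, ← Real.rpow_neg_one]
      norm_num
    rw [e]
    field_simp
end
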